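/- arXiv:1905.01401 — 3 statements merged into one kernel-verified Lean document; each statement's English description precedes it below -/
import Mathlib

section
/- Let the candidate set be C = {X_1, ..., X_n} with n ≤ 3, and let V be any finite set of voters with an arbitrary voting profile. Then at least one of the bipartite graphs G(X_1,X_2), G(X_2,X_3), ..., G(X_{n-1},X_n), G(X_n,X_1) has a perfect matching. -/
/-- `d` is a metric: nonnegative, symmetric and satisfying the triangle inequality. -/
def IsMetric {α : Type*} (d : α → α → ℝ) : Prop :=
  (∀ x y, 0 ≤ d x y) ∧ (∀ x y, d x y = d y x) ∧ (∀ x y z, d x z ≤ d x y + d y z)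

/-- `d` on the entities `C ⊕ V` is consistent with the voting profile `pref`
(where `pref v X Y` means voter `v` strictly prefers candidate `X` to `Y`):
a more-preferred candidate is at weakly smaller distance. -/
def Consistent {C V : Type*} (pref : V → C → C → Prop) (d : C ⊕ V → C ⊕ V → ℝ) : Prop :=
  ∀ (v : V) (X Y : C), pref v X Y → d (Sum.inl X) (Sum.inr v) ≤ d (Sum.inl Y) (Sum.inr v)

/-- Edge of the bipartite graph `G(A,B)` between left copy `v` and right copy `v'`
of the voters: `P_v(B) ∩ Q_{v'}(A) ≠ ∅`, i.e. some candidate `Z` is liked at least as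
much as `B` by `v` and at most as much as `A` by `v'`. -/
def GEdge {C V : Type*} (pref : V → C → C → Prop) (A B : C) (v v' : V) : Prop :=
  ∃ Z : C, (Z = B ∨ pref v Z B) ∧ (Z = A ∨ pref v' A Z)

/-- The bipartite graph `G(A,B)` (both sides a copy of the voter set) has a perfect
matching. -/
def HasPM {C V : Type*} (pref : V → C → C → Prop) (A B : C) : Prop :=
  ∃ M : V ≃ V, ∀ v : V, GEdge pref A B v (M v)

/-- The weight `w(X,Y)` of the weighted tournament graph: the fraction of voters
preferring `X` to `Y`. -/
noncomputable def wgt {C V : Type*} [Fintype V] (pref : V → C → C → Prop) (X Y : C) : ℝ :=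
  (Nat.card {v : V // pref v X Y} : ℝ) / (Fintype.card V : ℝ)

/-!
For fixed `A`, `B`, a voter preferring `A` to `B` is adjacent to everyone on either side of
`G(A,B)`, and a third candidate `D` joins every `v` with `D ≻_v B` to every `w` with `A ≻_w D`.
By Hall's theorem `G(A,B)` has a perfect matching as soon as at least as many voters prefer `A`
to `B` as prefer `B` to `D`, and as prefer `D` to `A`. Around a cycle of three candidates this
holds for the pair with the most supporters.
-/

theorem exists_equiv_of_forall_ncard_le {α β : Type*} [Finite β]
    (hcard : Nat.card α = Nat.card β) {r : α → β → Prop}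
    (hall : ∀ S : Set α, S.ncard ≤ {b | ∃ a ∈ S, r a b}.ncard) :
    ∃ e : α ≃ β, ∀ a, r a (e a) := by
  classical
  have := Fintype.ofFinite β
  obtain ⟨f, f_injective, hf⟩ :=
    (Fintype.all_card_le_filter_rel_iff_exists_injective r).1 fun S => by
      simpa [← Set.ncard_coe_finset] using hall S
  have f_bijective : Function.Bijective f :=
    (Nat.bijective_iff_injective_and_card f).2 ⟨f_injective, hcard⟩
  exact ⟨Equiv.ofBijective f f_bijective, hf⟩

theorem exists_equiv_of_ncard_compl_union_le {α β : Type*} [Finite α] [Finite β]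
    (hcard : Nat.card α = Nat.card β) {r : α → β → Prop} {P L : Set α} {Q R : Set β}
    (hP : ∀ a ∈ P, ∀ b, r a b) (hQ : ∀ a, ∀ b ∈ Q, r a b) (hLR : ∀ a ∈ L, ∀ b ∈ R, r a b)
    (hPL : (P ∪ L)ᶜ.ncard ≤ Q.ncard) (hQR : (Q ∪ R)ᶜ.ncard ≤ P.ncard) :
    ∃ e : α ≃ β, ∀ a, r a (e a) := by
  refine exists_equiv_of_forall_ncard_le hcard fun S => ?_
  by_cases hSP : ∃ a ∈ S, a ∈ P
  · obtain ⟨a, haS, haP⟩ := hSP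
    have neighbors_eq : {b | ∃ a ∈ S, r a b} = Set.univ :=
      Set.eq_univ_of_forall fun b => ⟨a, haS, hP a haP b⟩
    rw [neighbors_eq, Set.ncard_univ, ← hcard]
    exact Set.ncard_le_card S
  by_cases hSL : ∃ a ∈ S, a ∈ L
  · obtain ⟨a, haS, haL⟩ := hSL
    have subset_compl : S ⊆ Pᶜ := fun a haS haP => hSP ⟨a, haS, haP⟩
    have subset_neighbors : Q ∪ R ⊆ {b | ∃ a ∈ S, r a b} := fun b hb =>
      ⟨a, haS, hb.elim (hQ a b) (hLR a haL b)⟩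
    have card_P := Set.ncard_add_ncard_compl P
    have card_QR := Set.ncard_add_ncard_compl (Q ∪ R)
    calc S.ncard ≤ Pᶜ.ncard := Set.ncard_le_ncard subset_compl
      _ ≤ (Q ∪ R).ncard := by omega
      _ ≤ _ := Set.ncard_le_ncard subset_neighbors
  · obtain rfl | ⟨a, haS⟩ := S.eq_empty_or_nonempty
    · simp
    have subset_compl : S ⊆ (P ∪ L)ᶜ := fun a haS ha =>
      ha.elim (fun haP => hSP ⟨a, haS, haP⟩) (fun haL => hSL ⟨a, haS, haL⟩)
    have subset_neighbors : Q ⊆ {b | ∃ a ∈ S, r a b} := fun b hb => ⟨a, haS, hQ a b hb⟩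
    calc S.ncard ≤ (P ∪ L)ᶜ.ncard := Set.ncard_le_ncard subset_compl
      _ ≤ Q.ncard := hPL
      _ ≤ _ := Set.ncard_le_ncard subset_neighbors

section Profile

variable {C V : Type*} {pref : V → C → C → Prop} {A B D : C} {v v' : V}

theorem GEdge.of_pref_left (h : pref v A B) : GEdge pref A B v v' :=
  ⟨A, Or.inr h, Or.inl rfl⟩

theorem GEdge.of_pref_right (h : pref v' A B) : GEdge pref A B v v' :=
  ⟨B, Or.inl rfl, Or.inr h⟩

theorem GEdge.of_pref_of_pref (h : pref v D B) (h' : pref v' A D) : GEdge pref A B v v' :=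
  ⟨D, Or.inr h, Or.inr h'⟩

variable (pref) in
theorem HasPM.refl (A : C) : HasPM pref A A :=
  ⟨Equiv.refl V, fun _ => ⟨A, Or.inl rfl, Or.inl rfl⟩⟩

theorem pref_of_ne_of_not_pref [∀ v, Std.Trichotomous (pref v)] (hne : A ≠ B)
    (h : ¬ pref v A B) : pref v B A :=
  by_contra fun h' => hne (Std.Trichotomous.trichotomous A B h h')

variable [Finite V]

theorem HasPM.of_ncard_compl_union_le
    (hB : ({v | pref v A B} ∪ {v | pref v D B})ᶜ.ncard ≤ {v | pref v A B}.ncard)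
    (hA : ({v | pref v A B} ∪ {v | pref v A D})ᶜ.ncard ≤ {v | pref v A B}.ncard) :
    HasPM pref A B :=
  exists_equiv_of_ncard_compl_union_le rfl (fun _ h _ => .of_pref_left h)
    (fun _ _ h => .of_pref_right h) (fun _ h _ h' => .of_pref_of_pref h h') hB hA

variable [∀ v, Std.Trichotomous (pref v)]

theorem HasPM.of_ncard_pref_le (hAB : A ≠ B)
    (h : {v | pref v B A}.ncard ≤ {v | pref v A B}.ncard) : HasPM pref A B := by
  have compl_subset (T : Set V) : ({v | pref v A B} ∪ T)ᶜ ⊆ {v | pref v B A} :=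
    fun _ hv => pref_of_ne_of_not_pref hAB fun hv' => hv (Or.inl hv')
  exact .of_ncard_compl_union_le (D := B) ((Set.ncard_le_ncard (compl_subset _)).trans h)
    ((Set.ncard_le_ncard (compl_subset _)).trans h)

theorem HasPM.of_ncard_pref_le_of_ncard_pref_le (hBD : B ≠ D) (hDA : D ≠ A)
    (hB : {v | pref v B D}.ncard ≤ {v | pref v A B}.ncard)
    (hA : {v | pref v D A}.ncard ≤ {v | pref v A B}.ncard) : HasPM pref A B := by
  have compl_subset_B : ({v | pref v A B} ∪ {v | pref v D B})ᶜ ⊆ {v | pref v B D} :=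
    fun _ hv => pref_of_ne_of_not_pref hBD.symm fun hv' => hv (Or.inr hv')
  have compl_subset_A : ({v | pref v A B} ∪ {v | pref v A D})ᶜ ⊆ {v | pref v D A} :=
    fun _ hv => pref_of_ne_of_not_pref hDA.symm fun hv' => hv (Or.inr hv')
  exact .of_ncard_compl_union_le ((Set.ncard_le_ncard compl_subset_B).trans hB)
    ((Set.ncard_le_ncard compl_subset_A).trans hA)

variable (pref)

theorem hasPM_or_hasPM_swap (A B : C) : HasPM pref A B ∨ HasPM pref B A := by
  obtain rfl | hAB := eq_or_ne A B
  · exact Or.inl (.refl pref A)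
  · exact (le_total {v | pref v B A}.ncard {v | pref v A B}.ncard).imp
      (.of_ncard_pref_le hAB) (.of_ncard_pref_le hAB.symm)

theorem hasPM_or_hasPM_or_hasPM_of_cycle (A B D : C) :
    HasPM pref A B ∨ HasPM pref B D ∨ HasPM pref D A := by
  obtain rfl | hAB := eq_or_ne A B
  · exact Or.inl (.refl pref A)
  obtain rfl | hBD := eq_or_ne B D
  · exact Or.inr (Or.inl (.refl pref B))
  obtain rfl | hDA := eq_or_ne D A
  · exact Or.inr (Or.inr (.refl pref D))
  let ab := {v | pref v A B}.ncard
  let bd := {v | pref v B D}.ncard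
  let da := {v | pref v D A}.ncard
  have exists_largest : (bd ≤ ab ∧ da ≤ ab) ∨ (da ≤ bd ∧ ab ≤ bd) ∨ (ab ≤ da ∧ bd ≤ da) := by
    omega
  exact exists_largest.imp (fun h => .of_ncard_pref_le_of_ncard_pref_le hBD hDA h.1 h.2)
    (.imp (fun h => .of_ncard_pref_le_of_ncard_pref_le hDA hAB h.1 h.2)
      (fun h => .of_ncard_pref_le_of_ncard_pref_le hAB hBD h.1 h.2))

end Profile

theorem stmt_8_general {C V : Type*} [Finite V] {n : ℕ} (hn1 : 1 ≤ n) (hn3 : n ≤ 3)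
    (X : Fin n → C) (pref : V → C → C → Prop) [∀ v, Std.Trichotomous (pref v)] :
    ∃ i : Fin n, HasPM pref (X i) (X (finRotate n i)) := by
  obtain rfl | rfl | rfl : n = 1 ∨ n = 2 ∨ n = 3 := by omega
  · exact ⟨0, .refl pref (X 0)⟩
  · obtain h | h := hasPM_or_hasPM_swap pref (X 0) (X 1)
    exacts [⟨0, h⟩, ⟨1, h⟩]
  · obtain h | h | h := hasPM_or_hasPM_or_hasPM_of_cycle pref (X 0) (X 1) (X 2)
    exacts [⟨0, h⟩, ⟨1, h⟩, ⟨2, h⟩]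

/-- Theorem 4.7 (Conjecture 4.6 for at most 3 candidates): if the candidate set is
`C = {X_1, …, X_n}` with `n ≤ 3`, then for any voting profile at least one of the
bipartite graphs `G(X_1,X_2), …, G(X_{n-1},X_n), G(X_n,X_1)` has a perfect matching.
(`finRotate n` sends index `i` to `i + 1` cyclically.) -/
theorem stmt_8 {C V : Type*} [Fintype V] {n : ℕ} (hn1 : 1 ≤ n) (hn3 : n ≤ 3)
    (X : Fin n → C) (hX : Function.Bijective X)
    (pref : V → C → C → Prop) (hpref : ∀ v, IsStrictTotalOrder C (pref v)) :
    ∃ i : Fin n, HasPM pref (X i) (X (finRotate n i)) := stmt_8_general hn1 hn3 X pref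
end

section
/- Suppose the weighted tournament graph induced by the voting profile is cyclically symmetric, i.e., there exists a permutation τ of the n candidates that is a single n-cycle such that w(τ(X),τ(Y)) = w(X,Y) for all distinct candidates X, Y, where w(X,Y) = |{v ∈ V : X ≻_v Y}|/m. Then for every candidate A, every metric d consistent with the profile, and every candidate B, Σ_{v ∈ V} d(A,v) ≤ 3 · Σ_{v ∈ V} d(B,v); i.e., selecting any candidate yields distortion at most 3 on such a profile. -/
/-!
By Hall's theorem, the graph `G(A,B)` has a perfect matching `M` as soon as every set `S` of voters
has at least `|S|` neighbours; the triangle inequality then bounds `d(A, M v)` by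
`2 d(B, v) + d(B, M v)`, and summing over `v` gives the factor `3`.

For Hall's condition, let `f` be a weight-preserving map with `f A = B` and let `P` be the set of
candidates that some voter of `S` likes at least as much as `B`. If `A ∈ P`, every voter is a
neighbour of `S`. Otherwise the orbit of `A` enters `P` at `B` and, being periodic, leaves it again:
there is `Y ∈ P` with `f Y ∉ P`. All of `S` prefers `B` to `f Y`, every voter preferring `A` to `Y`
is a neighbour of `S`, and these two groups of voters have the same size as `w(B, f Y) = w(A, Y)`.
-/

open Function Set

theorem exists_mem_apply_notMem_of_mem_periodicPts {α : Type*} {f : α → α} {a : α}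
    (ha : a ∈ periodicPts f) {s : Set α} (has : a ∉ s) (hfa : f a ∈ s) : ∃ y ∈ s, f y ∉ s := by
  by_contra! hs
  obtain ⟨n, hn, hper⟩ := mem_periodicPts.1 ha
  have hreturn : f^[n - 1] (f a) = a := by
    rw [← iterate_succ_apply, Nat.succ_eq_add_one, Nat.sub_add_cancel hn]
    exact hper
  exact has (hreturn ▸ MapsTo.iterate hs (n - 1) hfa)

section Profile

variable {C V : Type*} {pref : V → C → C → Prop}

section Weights

variable [Fintype V]

theorem wgt_iterate {f : C → C} (hf : Injective f)
    (hsym : ∀ X Y : C, X ≠ Y → wgt pref (f X) (f Y) = wgt pref X Y) (k : ℕ) {X Y : C}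
    (hXY : X ≠ Y) : wgt pref (f^[k] X) (f^[k] Y) = wgt pref X Y := by
  induction k with
  | zero => rfl
  | succ k ih =>
    rw [iterate_succ_apply', iterate_succ_apply', hsym _ _ ((hf.iterate k).ne hXY), ih]

theorem ncard_setOf_pref_eq_of_wgt_eq {W X Y Z : C} (h : wgt pref W X = wgt pref Y Z) :
    {v | pref v W X}.ncard = {v | pref v Y Z}.ncard := by
  cases isEmpty_or_nonempty V
  · exact congrArg ncard (Subsingleton.elim _ _)
  · have hcard : (Fintype.card V : ℝ) ≠ 0 := Nat.cast_ne_zero.2 Fintype.card_ne_zero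
    exact Nat.cast_injective ((div_left_inj' hcard).1 h)

end Weights

/-- The union over `v ∈ S` of the sets `P_v(B)`: the candidates that some voter of `S` likes at
least as much as `B`. It is the set `P` of the proof of Hall's condition. -/
def weaklyAbove (pref : V → C → C → Prop) (S : Set V) (B : C) : Set C :=
  {Z | ∃ v ∈ S, Z = B ∨ pref v Z B}

/-- The neighbourhood in the bipartite graph `G(A,B)` of a set `S` of left copies of voters,
as it appears in Hall's condition. -/
def gNeighbors (pref : V → C → C → Prop) (A B : C) (S : Set V) : Set V :=
  {v' | ∃ v ∈ S, GEdge pref A B v v'}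

theorem self_mem_weaklyAbove {S : Set V} (hS : S.Nonempty) (B : C) : B ∈ weaklyAbove pref S B :=
  hS.imp fun _ hv => ⟨hv, Or.inl rfl⟩

theorem subset_setOf_pref_of_notMem_weaklyAbove (hpref : ∀ v, Std.Trichotomous (pref v))
    {S : Set V} {B X : C} (hX : X ∉ weaklyAbove pref S B) : S ⊆ {v | pref v B X} := by
  intro v hv
  by_contra hBX
  have hnot : ¬(X = B ∨ pref v X B) := fun h => hX ⟨v, hv, h⟩
  rw [not_or] at hnot
  exact hnot.1 ((hpref v).trichotomous X B hnot.2 hBX)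

theorem setOf_pref_subset_gNeighbors {S : Set V} {A B Y : C} (hY : Y ∈ weaklyAbove pref S B) :
    {v | pref v A Y} ⊆ gNeighbors pref A B S := by
  obtain ⟨v, hv, hYB⟩ := hY
  exact fun v' hAY => ⟨v, hv, Y, hYB, Or.inr hAY⟩

theorem gNeighbors_eq_univ {S : Set V} {A B : C} (hA : A ∈ weaklyAbove pref S B) :
    gNeighbors pref A B S = univ := by
  obtain ⟨v, hv, hAB⟩ := hA
  exact eq_univ_of_forall fun v' => ⟨v, hv, A, hAB, Or.inl rfl⟩

theorem ncard_le_ncard_gNeighbors [Fintype V] (hpref : ∀ v, Std.Trichotomous (pref v))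
    {f : C → C} {A : C} (hA : A ∈ periodicPts f)
    (hsym : ∀ Y, A ≠ Y → wgt pref (f A) (f Y) = wgt pref A Y) (S : Set V) :
    S.ncard ≤ (gNeighbors pref A (f A) S).ncard := by
  rcases S.eq_empty_or_nonempty with rfl | hS
  · simp
  by_cases hAP : A ∈ weaklyAbove pref S (f A)
  · exact ncard_le_ncard (gNeighbors_eq_univ hAP ▸ subset_univ S)
  · obtain ⟨Y, hY, hfY⟩ :=
      exists_mem_apply_notMem_of_mem_periodicPts hA hAP (self_mem_weaklyAbove hS (f A))
    have hne : A ≠ Y := fun h => hAP (h ▸ hY)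
    calc
      S.ncard ≤ {v | pref v (f A) (f Y)}.ncard :=
        ncard_le_ncard (subset_setOf_pref_of_notMem_weaklyAbove hpref hfY)
      _ = {v | pref v A Y}.ncard := ncard_setOf_pref_eq_of_wgt_eq (hsym Y hne)
      _ ≤ (gNeighbors pref A (f A) S).ncard := ncard_le_ncard (setOf_pref_subset_gNeighbors hY)

theorem hasPM_of_forall_ncard_le_ncard_gNeighbors [Finite V] {A B : C}
    (hall : ∀ S : Set V, S.ncard ≤ (gNeighbors pref A B S).ncard) : HasPM pref A B := by
  classical
  have := Fintype.ofFinite V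
  obtain ⟨M, hMinj, hM⟩ :=
    (Fintype.all_card_le_filter_rel_iff_exists_injective (GEdge pref A B)).1 fun S => by
      simpa [gNeighbors, ← ncard_coe_finset] using hall S
  exact ⟨Equiv.ofBijective M (Finite.injective_iff_bijective.1 hMinj), hM⟩

section Distances

variable {d : C ⊕ V → C ⊕ V → ℝ} {A B : C}

theorem dist_le_of_gEdge (hd : IsMetric d) (hcons : Consistent pref d) {v v' : V}
    (h : GEdge pref A B v v') :
    d (.inl A) (.inr v') ≤ 2 * d (.inl B) (.inr v) + d (.inl B) (.inr v') := by
  obtain ⟨-, hsymm, htri⟩ := hd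
  obtain ⟨Z, hZB, hAZ⟩ := h
  have hle_B : d (.inl Z) (.inr v) ≤ d (.inl B) (.inr v) :=
    hZB.elim (fun h => h ▸ le_rfl) (hcons v Z B)
  have hle_Z : d (.inl A) (.inr v') ≤ d (.inl Z) (.inr v') :=
    hAZ.elim (fun h => h ▸ le_rfl) (hcons v' A Z)
  calc
    d (.inl A) (.inr v') ≤ d (.inl Z) (.inr v') := hle_Z
    _ ≤ d (.inl Z) (.inr v) + d (.inr v) (.inr v') := htri _ _ _
    _ ≤ d (.inl Z) (.inr v) + (d (.inr v) (.inl B) + d (.inl B) (.inr v')) := by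
      gcongr
      exact htri _ _ _
    _ ≤ 2 * d (.inl B) (.inr v) + d (.inl B) (.inr v') := by
      rw [hsymm (.inr v)]
      linarith

theorem sum_dist_le_three_mul_of_hasPM [Fintype V] (hd : IsMetric d) (hcons : Consistent pref d)
    (hPM : HasPM pref A B) :
    ∑ v, d (.inl A) (.inr v) ≤ 3 * ∑ v, d (.inl B) (.inr v) := by
  obtain ⟨M, hM⟩ := hPM
  calc
    ∑ v, d (.inl A) (.inr v) = ∑ v, d (.inl A) (.inr (M v)) :=
      (M.sum_comp fun v => d (.inl A) (.inr v)).symm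
    _ ≤ ∑ v, (2 * d (.inl B) (.inr v) + d (.inl B) (.inr (M v))) :=
      Finset.sum_le_sum fun v _ => dist_le_of_gEdge hd hcons (hM v)
    _ = 2 * ∑ v, d (.inl B) (.inr v) + ∑ v, d (.inl B) (.inr v) := by
      rw [Finset.sum_add_distrib, ← Finset.mul_sum, M.sum_comp fun v => d (.inl B) (.inr v)]
    _ = 3 * ∑ v, d (.inl B) (.inr v) := by ring

end Distances

end Profile

theorem stmt_13_general {C V : Type*} [Fintype V] {pref : V → C → C → Prop}
    (hpref : ∀ v, Std.Trichotomous (pref v)) {f : C → C} {A : C} (hA : A ∈ periodicPts f)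
    (hsym : ∀ Y, A ≠ Y → wgt pref (f A) (f Y) = wgt pref A Y)
    {d : C ⊕ V → C ⊕ V → ℝ} (hd : IsMetric d) (hcons : Consistent pref d) :
    ∑ v, d (.inl A) (.inr v) ≤ 3 * ∑ v, d (.inl (f A)) (.inr v) :=
  sum_dist_le_three_mul_of_hasPM hd hcons <|
    hasPM_of_forall_ncard_le_ncard_gNeighbors (ncard_le_ncard_gNeighbors hpref hA hsym)

/-- Theorem 4.9: if the weighted tournament graph induced by the voting profile is
cyclically symmetric — there is a permutation `τ` of the candidates forming a single
cycle on all of them (every candidate reachable from every other by iterating `τ`) with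
`w (τ X) (τ Y) = w X Y` for all distinct `X, Y` — then selecting any candidate yields
distortion at most `3`: for every candidate `A`, every metric `d` consistent with the
profile and every candidate `B`, `∑_v d(A,v) ≤ 3 ∑_v d(B,v)`. -/
theorem stmt_13 {C V : Type*} [Fintype C] [Fintype V] [Nonempty V]
    (pref : V → C → C → Prop) (hpref : ∀ v, IsStrictTotalOrder C (pref v))
    (τ : Equiv.Perm C)
    (hcyc : ∀ X Y : C, ∃ k : ℕ, (τ ^ k) X = Y)
    (hsym : ∀ X Y : C, X ≠ Y → wgt pref (τ X) (τ Y) = wgt pref X Y)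
    (A : C)
    (d : C ⊕ V → C ⊕ V → ℝ) (hd : IsMetric d) (hcons : Consistent pref d)
    (B : C) :
    ∑ v : V, d (Sum.inl A) (Sum.inr v) ≤ 3 * ∑ v : V, d (Sum.inl B) (Sum.inr v) := by
  obtain ⟨k, rfl⟩ := hcyc A B
  rw [← Equiv.Perm.iterate_eq_pow]
  exact stmt_13_general (fun v => (hpref v).toTrichotomous)
    ((τ.injective.iterate k).mem_periodicPts A) (fun _ => wgt_iterate τ.injective hsym k) hd hcons
end

section
/- Let A ≠ B be candidates, let d be a metric consistent with the profile, and suppose G(A,B) has a perfect matching. Let AB = {v ∈ V : A ≻_v B} and BA = V \ AB. Then Σ_{v ∈ BA} (d(A,v) − 3·d(B,v)) ≤ (|BA| − (m − 2·|AB|)) · d(A,B), where m = |V|. (This is the key estimate in the proof that matching-uncovered candidates have distortion 3: any matching in G(A,B) restricted to the left and right copies of BA has size at least m − 2|AB|, and each matched left–right pair contributes cancelling terms.) -/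
/-!
Write `a v = d(A,v) - d(B,v)` and `b v = 2 d(B,v)`, so that the summand is `a v - b v`. An edge
`(v, v')` of `G(A,B)` gives `a v' ≤ b v` by consistency and two triangle inequalities, while
`a v ≤ d(A,B)` always. Reindex the sum of `a` along the perfect matching `M`, pairing `a (M v)`
with `b v`. The only left vertices `v` whose term is not already nonpositive are those where
`a (M v)` occurs without `b v`; these lie in `AB`, and each contributes at most `d(A,B)`.
The argument works with any set of voters in place of `AB`.
-/

open Finset

theorem sum_filter_not_sub_le_card_nsmul {ι R : Type*} [Fintype ι] [AddCommGroup R]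
    [PartialOrder R] [IsOrderedAddMonoid R] (σ : Equiv.Perm ι) (p : ι → Prop) [DecidablePred p]
    {a b : ι → R} {c : R} (hb : ∀ i, 0 ≤ b i) (hc : 0 ≤ c) (hac : ∀ i, a i ≤ c)
    (hab : ∀ i, a (σ i) ≤ b i) :
    ∑ i with ¬ p i, (a i - b i) ≤ #{i | p i} • c := by
  have pointwise (i : ι) :
      (if ¬ p (σ i) then a (σ i) else 0) - (if ¬ p i then b i else 0) ≤ if p i then c else 0 := by
    by_cases hi : p i <;> by_cases hσi : p (σ i) <;> simp [hi, hσi, hb, hc, hac, hab]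
  calc ∑ i with ¬ p i, (a i - b i)
      = (∑ i, if ¬ p i then a i else 0) - ∑ i, if ¬ p i then b i else 0 := by
        rw [sum_sub_distrib, sum_filter, sum_filter]
    _ = ∑ i, ((if ¬ p (σ i) then a (σ i) else 0) - if ¬ p i then b i else 0) := by
        rw [sum_sub_distrib, Equiv.sum_comp σ fun i => if ¬ p i then a i else 0]
    _ ≤ ∑ i, if p i then c else 0 := sum_le_sum fun i _ => pointwise i
    _ = #{i | p i} • c := by rw [← sum_filter, sum_const]

theorem card_filter_not_sub_card_sub_two_mul {ι R : Type*} [Fintype ι] [CommRing R]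
    (p : ι → Prop) [DecidablePred p] :
    (#{i | ¬ p i} : R) - ((Fintype.card ι : R) - 2 * (#{i | p i} : R)) = #{i | p i} := by
  rw [← card_univ, ← card_filter_add_card_filter_not (s := univ) p]
  push_cast
  ring

section Profile

variable {C V : Type*} {pref : V → C → C → Prop} {d : C ⊕ V → C ⊕ V → ℝ}

theorem Consistent.dist_le_of_eq_or_pref (hcons : Consistent pref d) {v : V} {X Y : C}
    (h : X = Y ∨ pref v X Y) : d (Sum.inl X) (Sum.inr v) ≤ d (Sum.inl Y) (Sum.inr v) := by
  rcases h with rfl | h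
  · exact le_rfl
  · exact hcons v X Y h

theorem GEdge.dist_le_add_dist {A B : C} {v v' : V} (hedge : GEdge pref A B v v')
    (htri : ∀ x y z, d x z ≤ d x y + d y z) (hcons : Consistent pref d) :
    d (Sum.inl A) (Sum.inr v') ≤ d (Sum.inl B) (Sum.inr v) + d (Sum.inr v) (Sum.inr v') := by
  obtain ⟨Z, hZB, hAZ⟩ := hedge
  calc d (Sum.inl A) (Sum.inr v')
      ≤ d (Sum.inl Z) (Sum.inr v') := hcons.dist_le_of_eq_or_pref (hAZ.imp_left Eq.symm)
    _ ≤ d (Sum.inl Z) (Sum.inr v) + d (Sum.inr v) (Sum.inr v') := htri _ _ _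
    _ ≤ d (Sum.inl B) (Sum.inr v) + d (Sum.inr v) (Sum.inr v') := by
        gcongr
        exact hcons.dist_le_of_eq_or_pref hZB

theorem GEdge.dist_sub_dist_le_two_mul {A B : C} {v v' : V} (hedge : GEdge pref A B v v')
    (hsymm : ∀ x y, d x y = d y x) (htri : ∀ x y z, d x z ≤ d x y + d y z)
    (hcons : Consistent pref d) :
    d (Sum.inl A) (Sum.inr v') - d (Sum.inl B) (Sum.inr v') ≤
      2 * d (Sum.inl B) (Sum.inr v) := by
  have hvia_B := htri (Sum.inr v) (Sum.inl B) (Sum.inr v')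
  rw [hsymm (Sum.inr v) (Sum.inl B)] at hvia_B
  linarith [hedge.dist_le_add_dist htri hcons]

end Profile

theorem stmt_16_general {C V : Type*} [Fintype V] (pref : V → C → C → Prop) (A B : C)
    (d : C ⊕ V → C ⊕ V → ℝ) (hd : IsMetric d) (hcons : Consistent pref d)
    (hPM : HasPM pref A B) (p : V → Prop) [DecidablePred p] :
    ∑ v with ¬ p v, (d (Sum.inl A) (Sum.inr v) - 3 * d (Sum.inl B) (Sum.inr v)) ≤
      #{v | p v} * d (Sum.inl A) (Sum.inl B) := by
  obtain ⟨hnonneg, hsymm, htri⟩ := hd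
  obtain ⟨M, hM⟩ := hPM
  calc ∑ v with ¬ p v, (d (Sum.inl A) (Sum.inr v) - 3 * d (Sum.inl B) (Sum.inr v))
      = ∑ v with ¬ p v, ((d (Sum.inl A) (Sum.inr v) - d (Sum.inl B) (Sum.inr v)) -
          2 * d (Sum.inl B) (Sum.inr v)) := sum_congr rfl fun v _ => by ring
    _ ≤ #{v | p v} • d (Sum.inl A) (Sum.inl B) :=
        sum_filter_not_sub_le_card_nsmul M p
          (fun v => mul_nonneg zero_le_two (hnonneg _ _)) (hnonneg _ _)
          (fun v => sub_le_iff_le_add.2 (htri _ _ _))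
          (fun v => (hM v).dist_sub_dist_le_two_mul hsymm htri hcons)
    _ = #{v | p v} * d (Sum.inl A) (Sum.inl B) := nsmul_eq_mul _ _

/-- The key estimate in the proof of Theorem 4.4: for distinct candidates `A, B`, a
metric `d` consistent with the profile, and a perfect matching in `G(A,B)`, the sum over
the voters `BA` preferring `B` to `A` of `d(A,v) - 3 d(B,v)` is at most
`(|BA| - (m - 2|AB|)) · d(A,B)`. -/
theorem stmt_16 {C V : Type*} [Fintype C] [Fintype V]
    (pref : V → C → C → Prop) [∀ v X Y, Decidable (pref v X Y)]
    (hpref : ∀ v, IsStrictTotalOrder C (pref v))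
    (A B : C) (hAB : A ≠ B)
    (d : C ⊕ V → C ⊕ V → ℝ) (hd : IsMetric d) (hcons : Consistent pref d)
    (hPM : HasPM pref A B) :
    ∑ v ∈ Finset.univ.filter (fun v : V => ¬ pref v A B),
        (d (Sum.inl A) (Sum.inr v) - 3 * d (Sum.inl B) (Sum.inr v)) ≤
      (((Finset.univ.filter (fun v : V => ¬ pref v A B)).card : ℝ) -
          ((Fintype.card V : ℝ) -
            2 * ((Finset.univ.filter (fun v : V => pref v A B)).card : ℝ))) *
        d (Sum.inl A) (Sum.inl B) := by
  rw [card_filter_not_sub_card_sub_two_mul]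
  exact stmt_16_general pref A B d hd hcons hPM fun v => pref v A B
end
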